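/- For the case a = 1/2 (classical elliptic integrals) the submultiplicativity inequality φ_K(r)·φ_K(t)/φ_K(rt) ≤ exp((1 − 1/K)(m(r) + m(t) − m(rt))) holds for all r, t ∈ (0,1) and K ≥ 1, where φ_K is the Hersch–Pfluger distortion function and m(r) = (2/π)(1-r²)K(√(1-r²))K(r). -/

import Mathlib

open Real Filter Set Topology

/-- Pochhammer symbol (rising factorial) for real `x`. -/
noncomputable def poch (x : ℝ) (n : ℕ) : ℝ := (ascPochhammer ℝ n).eval x

/-- Generalized complete elliptic integral of the first kind. -/
noncomputable def Ka (a r : ℝ) : ℝ :=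
  (π / 2) * ∑' n : ℕ, (poch a n * poch (1 - a) n / (n.factorial : ℝ) ^ 2) * r ^ (2 * n)

/-- Generalized complete elliptic integral of the second kind. -/
noncomputable def Ea (a r : ℝ) : ℝ :=
  (π / 2) * ∑' n : ℕ, (poch (a - 1) n * poch (1 - a) n / (n.factorial : ℝ) ^ 2) * r ^ (2 * n)

/-- Generalized Grötzsch ring function. -/
noncomputable def muG (a r : ℝ) : ℝ :=
  π / (2 * Real.sin (π * a)) * (Ka a (Real.sqrt (1 - r ^ 2)) / Ka a r)

/-- Generalized Hersch–Pfluger distortion function. -/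
noncomputable def phiHP (a K r : ℝ) : ℝ := Function.invFun (muG a) (muG a r / K)

/-- The function mₐ(r). -/
noncomputable def mA (a r : ℝ) : ℝ :=
  2 / (π * Real.sin (π * a)) * (1 - r ^ 2) * Ka a (Real.sqrt (1 - r ^ 2)) * Ka a r

/-- Digamma function (as the logarithmic derivative of Γ). -/
noncomputable def psiDG (x : ℝ) : ℝ := deriv (fun t => Real.log (Real.Gamma t)) x

/-- Ramanujan constant R(a). -/
noncomputable def RamanujanR (a : ℝ) : ℝ :=
  -2 * Real.eulerMascheroniConstant - psiDG a - psiDG (1 - a)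

lemma abstract_sub (U M B : ℝ → ℝ)
    (hU : ∀ x > 0, HasDerivAt U (U x / M x) x) (hM : ∀ x > 0, HasDerivAt M (B x) x)
    (Up : ∀ x > 0, 0 < U x) (Mp : ∀ x > 0, 0 < M x)
    (hB : ∀ x y, 0 < x → x ≤ y → B y ≤ B x) (B1 : ∀ x > 0, 1 ≤ B x)
    (M0 : Tendsto M (𝓝[>] 0) (𝓝 0)) (hs : ∀ w > 0, ∃ y > 0, U y = w)
    (u : ℝ) (hu : 0 < u) (hu1 : u ≤ 1) (x1 x2 y1 y2 y3 : ℝ) (hx1 : 0 < x1) (hx2 : 0 < x2)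
    (hy1 : 0 < y1) (hy2 : 0 < y2) (hy3 : 0 < y3)
    (h1 : U y1 = u * U x1) (h2 : U y2 = u * U x2) (h3 : U y3 = u * U (x1 + x2)) :
    y3 + (1 - u) * M (x1 + x2) ≤ (y1 + (1 - u) * M x1) + (y2 + (1 - u) * M x2) := by
  have Umono : StrictMonoOn U (Ioi 0) := by
    apply strictMonoOn_of_deriv_pos (convex_Ioi 0)
    · exact fun x hx => (hU x hx).continuousAt.continuousWithinAt
    · intro x hx
      rw [interior_Ioi] at hx
      rw [(hU x hx).deriv]
      exact div_pos (Up x hx) (Mp x hx)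
  have MU : MonotoneOn (fun x => M x / U x) (Ioi 0) := by
    have hd : ∀ x > 0, HasDerivAt (fun x => M x / U x) ((B x - 1) / U x) x := by
      intro x hx
      refine ((hM x hx).div (hU x hx) (Up x hx).ne').congr_deriv ?_
      have := (Up x hx).ne'
      have h2 := (Mp x hx).ne'
      rw [mul_div_cancel₀ _ h2]
      field_simp
    apply monotoneOn_of_deriv_nonneg (convex_Ioi 0)
    · exact fun x hx => (hd x hx).continuousAt.continuousWithinAt
    · intro x hx
      rw [interior_Ioi] at hx
      exact (hd x hx).differentiableAt.differentiableWithinAt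
    · intro x hx
      rw [interior_Ioi] at hx
      rw [(hd x hx).deriv]
      exact div_nonneg (by linarith [B1 x hx]) (Up x hx).le
  have hN : ∀ x > 0, 0 ≤ M x - x * B x := by
    intro x hx
    have hmono : MonotoneOn (fun t => M t - t * B x) (Ioc 0 x) := by
      have hd : ∀ t > 0, HasDerivAt (fun t => M t - t * B x) (B t - 1 * B x) t :=
        fun t ht => (hM t ht).sub ((hasDerivAt_id t).mul_const _)
      apply monotoneOn_of_deriv_nonneg (convex_Ioc 0 x)
      · exact fun t ht => (hd t ht.1).continuousAt.continuousWithinAt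
      · intro t ht
        rw [interior_Ioc] at ht
        exact (hd t ht.1).differentiableAt.differentiableWithinAt
      · intro t ht
        rw [interior_Ioc] at ht
        rw [(hd t ht.1).deriv]
        linarith [hB t x ht.1 ht.2.le]
    have hl : Tendsto (fun t => M t - t * B x) (𝓝[>] 0) (𝓝 (0 - 0 * B x)) := by
      apply M0.sub
      apply Tendsto.mul_const
      exact tendsto_nhdsWithin_of_tendsto_nhds tendsto_id
    have := le_of_tendsto hl (b := M x - x * B x) (by
      filter_upwards [Ioc_mem_nhdsGT hx] with t ht
      exact hmono ht ⟨hx, le_rfl⟩ ht.2)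
    simpa using this
  have hZ : ∀ x > 0, ∀ y > 0, y ≤ x → 
      x * M y / M x - y ≤ (1 - U y / U x) * (M x - x * B x) := by
    intro x hx y hy hyx
    set N := M x - x * B x with hNd
    have hd : ∀ t > 0, HasDerivAt (fun t => x * M t / M x - t - (1 - U t / U x) * N)
        (x * B t / M x - 1 - (0 - (U t / M t) / U x) * N) t := fun t ht =>
      ((((hM t ht).const_mul x).div_const _).sub (hasDerivAt_id t)).sub
        (((hasDerivAt_const t (1:ℝ)).sub ((hU t ht).div_const _)).mul_const N)
    have hmono : MonotoneOn (fun t => x * M t / M x - t - (1 - U t / U x) * N) (Ioc 0 x) := by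
      apply monotoneOn_of_deriv_nonneg (convex_Ioc 0 x)
      · exact fun t ht => (hd t ht.1).continuousAt.continuousWithinAt
      · intro t ht
        rw [interior_Ioc] at ht
        exact (hd t ht.1).differentiableAt.differentiableWithinAt
      · intro t ht
        rw [interior_Ioc] at ht
        rw [(hd t ht.1).deriv]
        have Mx := Mp x hx
        have Ux := Up x hx
        have Mt := Mp t ht.1
        have Ut := Up t ht.1
        have e1 : x * B x / M x ≤ x * B t / M x := by
          have := hB t x ht.1 ht.2.le
          gcongr
        have e2 : 1 / M x ≤ (U t / M t) / U x := by
          have := MU (a := t) (b := x) ht.1 hx ht.2.le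
          simp only at this
          rw [div_le_div_iff₀ Ut Ux] at this
          rw [div_div, div_le_div_iff₀ Mx (by positivity)]
          linarith
        have e3 : 1 / M x * N ≤ (U t / M t) / U x * N :=
          mul_le_mul_of_nonneg_right e2 (hN x hx)
        have e4 : 1 / M x * N = 1 - x * B x / M x := by
          rw [hNd]; field_simp
        linarith
    have := hmono ⟨hy, hyx⟩ ⟨hx, le_rfl⟩ hyx
    simp only [div_self (Up x hx).ne', mul_div_assoc, div_self (Mp x hx).ne'] at this
    rw [mul_div_assoc]
    linarith
  choose! V Vp UV using hs
  have VU : ∀ y > 0, V (U y) = y := fun y hy =>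
    Umono.injOn (Vp _ (Up y hy)) hy (UV _ (Up y hy))
  have Vc : ∀ w > 0, ContinuousAt V w := by
    intro w hw
    have Vm : StrictMonoOn V (Ioi 0) := by
      intro a ha b hb hab
      by_contra! h
      have := Umono.monotoneOn (Vp b hb) (Vp a ha) h
      rw [UV a ha, UV b hb] at this
      linarith
    apply Vm.continuousAt_of_image_mem_nhds (Ioi_mem_nhds hw)
    have : V '' Ioi 0 = Ioi 0 := by
      ext y
      constructor
      · rintro ⟨a, ha, rfl⟩; exact Vp a ha
      · intro hy; exact ⟨U y, Up y hy, VU y hy⟩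
    rw [this]
    exact Ioi_mem_nhds (Vp w hw)
  have Vd : ∀ w > 0, HasDerivAt V ((w / M (V w))⁻¹) w := by
    intro w hw
    have := hU (V w) (Vp w hw)
    rw [UV w hw] at this
    apply HasDerivAt.of_local_left_inverse (Vc w hw) this
    · exact (div_pos hw (Mp _ (Vp w hw))).ne'
    · filter_upwards [Ioi_mem_nhds hw] with a ha using UV a ha
  set Y : ℝ → ℝ := fun x => V (u * U x) with hY
  have Yd : ∀ x > 0, HasDerivAt Y (M (Y x) / M x) x := by
    intro x hx
    have hp := mul_pos hu (Up x hx)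
    have := (Vd _ hp).comp x ((hU x hx).const_mul u)
    refine this.congr_deriv ?_
    have := (Up x hx).ne'
    have := (Mp x hx).ne'
    have := (Mp (V (u * U x)) (Vp _ hp)).ne'
    simp only [hY]
    field_simp
  have Rm : AntitoneOn (fun x => (Y x + (1 - u) * M x) / x) (Ioi 0) := by
    have hd : ∀ x > 0, HasDerivAt (fun x => (Y x + (1 - u) * M x) / x)
        (((M (Y x) / M x + (1 - u) * B x) * x - (Y x + (1 - u) * M x) * 1) / x ^ 2) x :=
      fun x hx => ((Yd x hx).add ((hM x hx).const_mul _)).div (hasDerivAt_id x) (ne_of_gt hx)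
    apply antitoneOn_of_deriv_nonpos (convex_Ioi 0)
    · exact fun x hx => (hd x hx).continuousAt.continuousWithinAt
    · intro x hx
      rw [interior_Ioi] at hx
      exact (hd x hx).differentiableAt.differentiableWithinAt
    · intro x hx
      rw [interior_Ioi] at hx
      rw [(hd x hx).deriv]
      have hx0 : 0 < x := hx
      apply div_nonpos_of_nonpos_of_nonneg _ (sq_nonneg x)
      have Ux := Up x hx
      have hp := mul_pos hu Ux
      have Yp : 0 < Y x := Vp _ hp
      have UY : U (Y x) = u * U x := UV _ hp
      have Yx : Y x ≤ x := by
        by_contra! h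
        have := Umono hx0 Yp h
        rw [UY] at this
        nlinarith
      have := hZ x hx (Y x) Yp Yx
      rw [UY, mul_div_assoc, mul_div_assoc, div_self Ux.ne'] at this
      linarith
  have e1 : Y x1 = y1 := by simp only [hY]; rw [← h1, VU y1 hy1]
  have e2 : Y x2 = y2 := by simp only [hY]; rw [← h2, VU y2 hy2]
  have e3 : Y (x1 + x2) = y3 := by simp only [hY]; rw [← h3, VU y3 hy3]
  have x3 : 0 < x1 + x2 := by positivity
  have r1 := Rm (a := x1) (b := x1 + x2) hx1 x3 (by linarith)
  have r2 := Rm (a := x2) (b := x1 + x2) hx2 x3 (by linarith)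
  simp only [e1, e2, e3] at r1 r2
  set q := (y3 + (1 - u) * M (x1 + x2)) / (x1 + x2) with hq
  have : y3 + (1 - u) * M (x1 + x2) = q * (x1 + x2) := by rw [hq]; field_simp
  rw [le_div_iff₀ hx1] at r1
  rw [le_div_iff₀ hx2] at r2
  rw [this]; linarith

noncomputable def cf (n : ℕ) : ℝ := poch (1/2) n * poch (1 - 1/2) n / (n.factorial : ℝ) ^ 2
noncomputable def ff (z : ℝ) : ℝ := ∑' n : ℕ, cf n * z ^ n
noncomputable def fd (z : ℝ) : ℝ := ∑' n : ℕ, cf n * (n * z ^ (n - 1))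
noncomputable def gg (z : ℝ) : ℝ := ∑' n : ℕ, (n * cf n) * z ^ n
noncomputable def gd (z : ℝ) : ℝ := ∑' n : ℕ, (n * cf n) * (n * z ^ (n - 1))

lemma cf_zero : cf 0 = 1 := by simp [cf, poch]

lemma cf_succ (n : ℕ) : ((n:ℝ) + 1) ^ 2 * cf (n + 1) = (n + 1/2) ^ 2 * cf n := by
  simp only [cf, poch, ascPochhammer_succ_eval, Nat.factorial_succ]
  have : (n.factorial : ℝ) ≠ 0 := by positivity
  push_cast
  field_simp
  ring

lemma cf_pos (n : ℕ) : 0 < cf n := by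
  induction n with
  | zero => simp [cf_zero]
  | succ n ih =>
    have h := cf_succ n
    have : 0 < ((n:ℝ) + 1/2) ^ 2 * cf n := by positivity
    rw [← h] at this
    exact pos_of_mul_pos_right this (by positivity)

lemma cf_le (n : ℕ) : cf n ≤ 1 := by
  induction n with
  | zero => simp [cf_zero]
  | succ n ih =>
    have h := cf_succ n
    have h1 := cf_pos (n+1)
    have h2 := cf_pos n
    have : ((n:ℝ) + 1) ^ 2 * cf (n + 1) ≤ (n + 1)^2 * 1 := by
      rw [h]; gcongr; norm_num
    exact le_of_mul_le_mul_left this (by positivity)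

lemma cf_lower (n : ℕ) : 1 / 4 ≤ ((n:ℝ) + 1) * cf (n + 1) := by
  induction n with
  | zero => have := cf_succ 0; norm_num [cf_zero] at this ⊢; linarith
  | succ n ih =>
    have h := cf_succ (n+1)
    have h2 := cf_pos (n+1)
    push_cast at h ⊢
    have : ((n:ℝ)+1+1) * ((n+1) * cf (n+1)) ≤ (n+1+1) * ((n+1+1) * cf (n+1+1)) := by
      calc _ ≤ ((n:ℝ) + 1 + 1/2)^2 * cf (n+1) := by nlinarith
        _ = _ := by rw [← h]; ring
    exact ih.trans (le_of_mul_le_mul_left this (by positivity))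

lemma cf_not_summable : ¬ Summable cf := by
  intro h
  have h1 := (summable_nat_add_iff 1).2 h
  have h2 : Summable (fun n : ℕ => 1 / ((n:ℝ) + 1)) := by
    refine Summable.of_nonneg_of_le (fun n => by positivity) (fun n => ?_) (h1.mul_left 4)
    rw [div_le_iff₀ (by positivity)]
    linarith [cf_lower n]
  have h3 := (summable_nat_add_iff (f := fun n : ℕ => 1 / (n:ℝ)) 1).1 (by simpa using h2)
  exact Real.not_summable_one_div_natCast h3

lemma ps_summable (a : ℕ → ℝ) (k : ℕ) (h : ∀ n : ℕ, |a n| ≤ (n:ℝ) ^ k) (z : ℝ) (hz : |z| < 1) :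
    Summable (fun n => a n * z ^ n) := by
  have := summable_pow_mul_geometric_of_norm_lt_one k (r := |z|) (by simpa using hz)
  refine Summable.of_norm_bounded this fun n => ?_
  rw [norm_mul, norm_pow, Real.norm_eq_abs, Real.norm_eq_abs]
  gcongr
  exact h n

lemma ps_deriv (a : ℕ → ℝ) (k : ℕ) (h : ∀ n : ℕ, |a n| ≤ (n:ℝ) ^ k) (z : ℝ) (hz : |z| < 1) :
    HasDerivAt (fun z => ∑' n, a n * z ^ n) (∑' n : ℕ, a n * (n * z ^ (n-1))) z := by
  obtain ⟨ρ, hρ, hρ1⟩ := exists_between hz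
  have hρ0 : 0 < ρ := (abs_nonneg z).trans_lt hρ
  have hu : Summable (fun n : ℕ => ρ⁻¹ * ((n:ℝ) ^ (k+1) * ρ ^ n)) :=
    (summable_pow_mul_geometric_of_norm_lt_one (k+1) (r := ρ)
      (by rwa [Real.norm_eq_abs, abs_of_pos hρ0])).mul_left _
  refine hasDerivAt_tsum_of_isPreconnected hu (t := Metric.ball (0:ℝ) ρ) Metric.isOpen_ball
    (convex_ball 0 ρ).isPreconnected (fun n y _ => (hasDerivAt_pow n y).const_mul (a n)) ?_
    (y₀ := 0) (by simpa using hρ0) (ps_summable a k h 0 (by simp)) (by simpa using hρ)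
  intro n y hy
  have hy : |y| < ρ := by simpa using hy
  rcases n with _ | n
  · simp
  · have e : ρ⁻¹ * (((n+1:ℕ):ℝ) ^ (k+1) * ρ ^ (n+1)) = ((n+1:ℕ):ℝ) ^ k * (((n+1:ℕ):ℝ) * ρ ^ n) := by
      field_simp
      ring
    rw [e, norm_mul, norm_mul, norm_pow, Real.norm_eq_abs, Real.norm_eq_abs, Real.norm_eq_abs,
      abs_of_nonneg (by positivity : (0:ℝ) ≤ ((n+1:ℕ):ℝ))]
    gcongr
    · exact h _
    · simp only [Nat.add_sub_cancel]
      gcongr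

lemma cf_b (n : ℕ) : |cf n| ≤ (n:ℝ) ^ 0 := by
  rw [abs_of_pos (cf_pos n), pow_zero]; exact cf_le n
lemma ncf_b (n : ℕ) : |n * cf n| ≤ (n:ℝ) ^ 1 := by
  rw [abs_of_nonneg (mul_nonneg n.cast_nonneg (cf_pos n).le), pow_one]
  exact mul_le_of_le_one_right n.cast_nonneg (cf_le n)
lemma nncf_b (n : ℕ) : |n ^ 2 * cf n| ≤ (n:ℝ) ^ 2 := by
  rw [abs_of_nonneg (mul_nonneg (by positivity) (cf_pos n).le)]
  exact mul_le_of_le_one_right (by positivity) (cf_le n)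

lemma ff_deriv (z : ℝ) (hz : |z| < 1) : HasDerivAt ff (fd z) z := ps_deriv cf 0 cf_b z hz
lemma gg_deriv (z : ℝ) (hz : |z| < 1) : HasDerivAt gg (gd z) z :=
  ps_deriv (fun n => n * cf n) 1 ncf_b z hz

lemma gg_eq (z : ℝ) : gg z = z * fd z := by
  rw [gg, fd, ← tsum_mul_left]
  congr 1; ext n
  rcases n with _ | n
  · simp
  · simp [pow_succ]; ring

lemma gd_eq (z : ℝ) (hz : |z| < 1) : gd z = z * gd z + gg z + ff z / 4 := by
  have e1 : z * gd z = ∑' n : ℕ, ((n:ℝ)^2 * cf n) * z ^ n := by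
    rw [gd, ← tsum_mul_left]
    congr 1; ext n
    rcases n with _ | n
    · simp
    · simp [pow_succ]; ring
  have s0 := ps_summable _ 0 cf_b z hz
  have s1 := ps_summable _ 1 ncf_b z hz
  have s2 := ps_summable _ 2 nncf_b z hz
  have t : (fun n : ℕ => (((n+1:ℕ):ℝ) * cf (n+1)) * (((n+1:ℕ):ℝ) * z ^ (n+1-1)))
     = fun n : ℕ => ((n:ℝ)^2 * cf n) * z ^ n + (n * cf n) * z ^ n + cf n * z ^ n / 4 := by
    ext n
    have := cf_succ n
    push_cast
    linear_combination z ^ n * this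
  have e2 : gd z = ∑' n : ℕ, (((n:ℝ)^2 * cf n) * z ^ n + (n * cf n) * z ^ n + cf n * z ^ n / 4) := by
    rw [← t, gd]
    have hs : Summable (fun n : ℕ => ((n * cf n) * (n * z ^ (n - 1)) : ℝ)) := by
      rw [← summable_nat_add_iff 1, t]
      exact (s2.add s1).add (s0.div_const 4)
    rw [hs.tsum_eq_zero_add]
    simp
  rw [e1, e2, (s2.add s1).tsum_add (s0.div_const 4), s2.tsum_add s1, tsum_div_const]
  rfl

lemma ff_one_le (z : ℝ) (hz : 0 ≤ z) (hz1 : z < 1) : 1 ≤ ff z := by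
  have s0 := ps_summable _ 0 cf_b z (by rwa [abs_of_nonneg hz])
  have := s0.le_tsum 0 (fun n _ => mul_nonneg (cf_pos n).le (pow_nonneg hz n))
  rw [cf_zero, pow_zero, one_mul] at this
  exact this

lemma fd_nonneg (z : ℝ) (hz : 0 ≤ z) : 0 ≤ fd z :=
  tsum_nonneg fun n => mul_nonneg (cf_pos n).le (by positivity)

lemma ff_mono : MonotoneOn ff (Ico 0 1) := by
  have ha : ∀ z ∈ Ico (0:ℝ) 1, |z| < 1 := fun z hz => by rw [abs_of_nonneg hz.1]; exact hz.2
  apply monotoneOn_of_deriv_nonneg (convex_Ico 0 1)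
  · exact fun z hz => (ff_deriv z (ha z hz)).continuousAt.continuousWithinAt
  · intro z hz
    exact (ff_deriv z (ha z (interior_subset hz))).differentiableAt.differentiableWithinAt
  · intro z hz
    rw [(ff_deriv z (ha z (interior_subset hz))).deriv]
    exact fd_nonneg z (interior_subset hz).1

/-- `p = z (1-z) f'` -/
noncomputable def pp (z : ℝ) : ℝ := (1 - z) * gg z

lemma pp_deriv (z : ℝ) (hz : |z| < 1) : HasDerivAt pp (ff z / 4) z := by
  have := ((hasDerivAt_id z).const_sub 1).mul (gg_deriv z hz)
  refine this.congr_deriv ?_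
  have := gd_eq z hz
  simp only [id]
  linarith

lemma pp_le (z : ℝ) (hz : 0 ≤ z) (hz1 : z < 1) : pp z ≤ z * (ff z / 4) := by
  have ha : ∀ t ∈ Icc (0:ℝ) z, |t| < 1 := fun t ht => by
    rw [abs_of_nonneg ht.1]; exact ht.2.trans_lt hz1
  have hm : AntitoneOn (fun t => pp t - t * (ff z / 4)) (Icc 0 z) := by
    have hd : ∀ t ∈ Icc (0:ℝ) z, HasDerivAt (fun t => pp t - t * (ff z / 4)) (ff t / 4 - 1 * (ff z / 4)) t :=
      fun t ht => (pp_deriv t (ha t ht)).sub ((hasDerivAt_id t).mul_const _)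
    apply antitoneOn_of_deriv_nonpos (convex_Icc 0 z)
    · exact fun t ht => (hd t ht).continuousAt.continuousWithinAt
    · intro t ht
      exact (hd t (interior_subset ht)).differentiableAt.differentiableWithinAt
    · intro t ht
      have ht := interior_subset ht
      rw [(hd t ht).deriv]
      have := ff_mono ⟨ht.1, ht.2.trans_lt hz1⟩ ⟨hz, hz1⟩ ht.2
      linarith
  have := hm ⟨le_rfl, hz⟩ ⟨hz, le_rfl⟩ hz
  have h0 : pp 0 = 0 := by simp [pp, gg_eq]
  simp only [h0] at this
  linarith

lemma fd_le (z : ℝ) (hz : 0 < z) (hz1 : z < 1) : 2 * (1 - z) * fd z ≤ ff z := by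
  have h := pp_le z hz.le hz1
  rw [pp, gg_eq] at h
  have h2 : z * ((1 - z) * fd z) ≤ z * (ff z / 4) := by linarith
  have := le_of_mul_le_mul_left h2 hz
  linarith [ff_one_le z hz.le hz1]

/-- `E` normalized -/
noncomputable def ee (z : ℝ) : ℝ := (1 - z) * (ff z + 2 * fd z * z)

lemma ee_anti : AntitoneOn ee (Ioo 0 1) := by
  have ha : ∀ z ∈ Ioo (0:ℝ) 1, |z| < 1 := fun z hz => by rw [abs_of_nonneg hz.1.le]; exact hz.2
  have he : ee = fun z => (1 - z) * ff z + 2 * pp z := by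
    ext z; rw [ee, pp, gg_eq]; ring
  have hd : ∀ z ∈ Ioo (0:ℝ) 1, HasDerivAt ee ((-1) * ff z + (1 - z) * fd z + 2 * (ff z / 4)) z := by
    intro z hz
    rw [he]
    exact (((hasDerivAt_id z).const_sub 1).mul (ff_deriv z (ha z hz))).add
      ((pp_deriv z (ha z hz)).const_mul 2)
  apply antitoneOn_of_deriv_nonpos (convex_Ioo 0 1)
  · exact fun t ht => (hd t ht).continuousAt.continuousWithinAt
  · intro t ht
    exact (hd t (interior_subset ht)).differentiableAt.differentiableWithinAt
  · intro t ht
    have ht := interior_subset ht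
    rw [(hd t ht).deriv]
    linarith [fd_le t ht.1 ht.2]

lemma ee_pos (z : ℝ) (hz : 0 < z) (hz1 : z < 1) : 0 < ee z := by
  have := ff_one_le z hz.le hz1
  have := fd_nonneg z hz.le
  exact mul_pos (by linarith) (by positivity)

/-- Abel-type lemma -/
lemma abel_lim (a : ℕ → ℝ) (k : ℕ) (h : ∀ n : ℕ, |a n| ≤ (n:ℝ) ^ k) (L : ℝ)
    (hL : Tendsto a atTop (𝓝 L)) :
    Tendsto (fun z => (1 - z) * ∑' n, a n * z ^ n) (𝓝[<] 1) (𝓝 L) := by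
  set b : ℕ → ℝ := fun n => Nat.casesOn n (a 0) (fun m => a (m+1) - a m) with hb
  have hsum : ∀ n, ∑ i ∈ Finset.range (n+1), b i = a n := by
    intro n
    induction n with
    | zero => simp [hb]
    | succ n ih => rw [Finset.sum_range_succ, ih]; simp [hb]
  have ht : Tendsto (fun n => ∑ i ∈ Finset.range n, b i) atTop (𝓝 L) := by
    rw [← tendsto_add_atTop_iff_nat 1]
    simpa only [hsum] using hL
  have := Real.tendsto_tsum_powerSeries_nhdsWithin_lt ht
  refine this.congr' ?_
  filter_upwards [Ioo_mem_nhdsLT (show (0:ℝ) < 1 by norm_num)] with z hz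
  have hs := ps_summable a k h z (by rw [abs_of_pos hz.1]; exact hz.2)
  have hs1 := (summable_nat_add_iff 1).2 hs
  have hsb : Summable (fun n => b (n+1) * z ^ (n+1)) := by
    have := hs1.sub (hs.mul_left z)
    refine this.congr fun n => ?_
    simp [hb, pow_succ]; ring
  have hsb' := (summable_nat_add_iff (f := fun n => b n * z ^ n) 1).1 hsb
  rw [hsb'.tsum_eq_zero_add]
  have : ∑' n, b (n+1) * z ^ (n+1) = ∑' n, a (n+1) * z ^ (n+1) - z * ∑' n, a n * z ^ n := by
    rw [← tsum_mul_left, ← hs1.tsum_sub (hs.mul_left z)]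
    congr 1; ext n
    simp [hb, pow_succ]; ring
  rw [this]
  have e := hs.tsum_eq_zero_add
  have : b 0 = a 0 := rfl
  rw [this]
  linear_combination -e

lemma cf_W (n : ℕ) : (2 * (n:ℝ) + 1) * cf n * Real.Wallis.W n = 1 := by
  induction n with
  | zero => simp [cf_zero, Real.Wallis.W]
  | succ n ih =>
    rw [Real.Wallis.W_succ]
    have h := cf_succ n
    have h' : cf (n+1) = (n + 1/2) ^ 2 * cf n / ((n:ℝ) + 1) ^ 2 := by
      rw [eq_div_iff (by positivity)]; linarith
    rw [h']
    push_cast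
    refine Eq.trans ?_ ih
    have : (2:ℝ) * (n + 1) + 1 ≠ 0 := by positivity
    have : (2:ℝ) * n + 1 ≠ 0 := by positivity
    have : (2:ℝ) * n + 3 ≠ 0 := by positivity
    field_simp
    ring

lemma cf_lim : Tendsto (fun n : ℕ => (2 * (n:ℝ) + 1) * cf n) atTop (𝓝 (2 / π)) := by
  have := Real.Wallis.tendsto_W_nhds_pi_div_two.inv₀ (by positivity)
  rw [inv_div] at this
  refine this.congr fun n => ?_
  exact (eq_inv_of_mul_eq_one_left (cf_W n)).symm

lemma cf_lim0 : Tendsto cf atTop (𝓝 0) := by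
  have h : Tendsto (fun n : ℕ => (2 * (n:ℝ) + 1)) atTop atTop :=
    tendsto_atTop_add_const_right _ _ (tendsto_natCast_atTop_atTop.const_mul_atTop (by norm_num))
  have := cf_lim.mul h.inv_tendsto_atTop
  rw [mul_zero] at this
  refine this.congr fun n => ?_
  have : (2 * (n:ℝ) + 1) ≠ 0 := by positivity
  simp only [Pi.inv_apply]
  field_simp

lemma ncf_lim : Tendsto (fun n : ℕ => n * cf n) atTop (𝓝 (1 / π)) := by
  have := (cf_lim.sub cf_lim0).div_const 2
  have e : (2 / π - 0) / 2 = 1 / π := by ring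
  rw [e] at this
  refine this.congr fun n => ?_
  ring

lemma ff_lim : Tendsto (fun z => (1 - z) * ff z) (𝓝[<] 1) (𝓝 0) := abel_lim cf 0 cf_b 0 cf_lim0
lemma pp_lim : Tendsto pp (𝓝[<] 1) (𝓝 (1 / π)) :=
  abel_lim (fun n => n * cf n) 1 ncf_b _ ncf_lim

lemma refl_lim : Tendsto (fun z : ℝ => 1 - z) (𝓝[>] 0) (𝓝[<] 1) := by
  apply tendsto_nhdsWithin_of_tendsto_nhds_of_eventually_within
  · apply tendsto_nhdsWithin_of_tendsto_nhds
    have : Tendsto (fun z : ℝ => 1 - z) (𝓝 0) (𝓝 (1 - 0)) := by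
      apply Continuous.tendsto; fun_prop
    simpa using this
  · filter_upwards [self_mem_nhdsWithin] with z hz
    have : 0 < z := hz
    simpa using this

lemma wronskian (z : ℝ) (hz : 0 < z) (hz1 : z < 1) :
    pp z * ff (1 - z) + ff z * pp (1 - z) = 1 / π := by
  set W : ℝ → ℝ := fun z => pp z * ff (1 - z) + ff z * pp (1 - z) with hW
  have hd : ∀ z ∈ Ioo (0:ℝ) 1, HasDerivAt W 0 z := by
    intro z hz
    have a1 : |z| < 1 := by rw [abs_of_pos hz.1]; exact hz.2
    have a2 : |1 - z| < 1 := by rw [abs_of_pos (by linarith [hz.2])]; linarith [hz.1]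
    have i : HasDerivAt (fun z : ℝ => 1 - z) (-1) z := (hasDerivAt_id z).const_sub 1
    have f2 := (ff_deriv _ a2).comp z i
    have p2 := (pp_deriv _ a2).comp z i
    have := ((pp_deriv z a1).mul f2).add ((ff_deriv z a1).mul p2)
    refine this.congr_deriv ?_
    simp only [Function.comp, pp, gg_eq]
    ring
  have hc : ∀ t ∈ Ioo (0:ℝ) 1, W t = W z := by
    intro t ht
    exact (convex_Ioo (0:ℝ) 1).is_const_of_fderivWithin_eq_zero (𝕜 := ℝ)
      (fun x hx => (hd x hx).differentiableAt.differentiableWithinAt)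
      (fun x hx => by
        rw [fderivWithin_of_isOpen isOpen_Ioo hx]
        have := (hd x hx).hasFDerivAt.fderiv
        rw [this]; ext; simp) ht ⟨hz, hz1⟩
  have hl : Tendsto W (𝓝[>] 0) (𝓝 ((1 - 0) * fd 0 * 0 + 1 * (1 / π))) := by
    have c0 : Tendsto ff (𝓝[>] 0) (𝓝 1) := by
      have := (ff_deriv 0 (by simp)).continuousAt.tendsto
      have e : ff 0 = 1 := by
        rw [ff, tsum_eq_single 0]
        · simp [cf_zero]
        · intro n hn; simp [hn]
      rw [e] at this
      exact this.mono_left nhdsWithin_le_nhds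
    have l1 : Tendsto (fun z : ℝ => z * ff (1 - z)) (𝓝[>] 0) (𝓝 0) := by
      have := ff_lim.comp refl_lim
      refine this.congr fun t => ?_
      simp
    have l2 := pp_lim.comp refl_lim
    have bd : Tendsto (fun z : ℝ => (1 - z) * fd z * (z * ff (1 - z))) (𝓝[>] 0) (𝓝 0) := by
      have hb : Tendsto (fun z : ℝ => z * ff (1 - z)) (𝓝[>] 0) (𝓝 0) := l1
      have up : Tendsto (fun z : ℝ => ff z / 2 * (z * ff (1 - z))) (𝓝[>] 0) (𝓝 0) := by
        have := (c0.div_const 2).mul hb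
        simpa using this
      refine tendsto_of_tendsto_of_tendsto_of_le_of_le' tendsto_const_nhds up ?_ ?_
      · filter_upwards [Ioo_mem_nhdsGT (show (0:ℝ) < 1 by norm_num)] with t ht
        have := ff_one_le (1 - t) (by linarith [ht.2]) (by linarith [ht.1])
        have := fd_nonneg t ht.1.le
        have := ht.1
        have : 0 ≤ 1 - t := by linarith [ht.2]
        positivity
      · filter_upwards [Ioo_mem_nhdsGT (show (0:ℝ) < 1 by norm_num)] with t ht
        have h1 := ff_one_le (1 - t) (by linarith [ht.2]) (by linarith [ht.1])
        have := fd_le t ht.1 ht.2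
        have := ht.1
        have : (1 - t) * fd t ≤ ff t / 2 := by linarith
        exact mul_le_mul_of_nonneg_right this (by positivity)
    have := bd.add (c0.mul l2)
    simp only [mul_zero]
    refine this.congr fun t => ?_
    simp only [hW, Function.comp, pp, gg_eq]
    ring
  have hl2 : Tendsto W (𝓝[>] 0) (𝓝 (W z)) := by
    refine tendsto_const_nhds.congr' ?_
    filter_upwards [Ioo_mem_nhdsGT (show (0:ℝ) < 1 by norm_num)] with t ht
    exact (hc t ht).symm
  have := tendsto_nhds_unique hl2 hl
  simpa using this

lemma ff_unbdd (C : ℝ) : ∃ z ∈ Ioo (0:ℝ) 1, C < ff z := by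
  by_contra! h
  apply cf_not_summable
  apply summable_of_sum_range_le (c := C) (fun n => (cf_pos n).le)
  intro n
  have hl : Tendsto (fun z : ℝ => ∑ i ∈ Finset.range n, cf i * z ^ i) (𝓝[<] 1)
      (𝓝 (∑ i ∈ Finset.range n, cf i * 1 ^ i)) := by
    apply tendsto_nhdsWithin_of_tendsto_nhds
    apply Continuous.tendsto (by fun_prop)
  simp only [one_pow, mul_one] at hl
  refine le_of_tendsto hl ?_
  filter_upwards [Ioo_mem_nhdsLT (show (0:ℝ) < 1 by norm_num)] with z hz
  refine le_trans ?_ (h z hz)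
  exact (ps_summable _ 0 cf_b z (by rw [abs_of_pos hz.1]; exact hz.2)).sum_le_tsum _
    (fun n _ => mul_nonneg (cf_pos n).le (pow_nonneg hz.1.le n))

noncomputable def UU (x : ℝ) : ℝ := π / 2 * (ff (1 - exp (-2 * x)) / ff (exp (-2 * x)))
noncomputable def MM (x : ℝ) : ℝ :=
  π / 2 * ((1 - exp (-2 * x)) * ff (exp (-2 * x)) * ff (1 - exp (-2 * x)))
noncomputable def BB (x : ℝ) : ℝ := π * (ff (exp (-2 * x)) * ee (1 - exp (-2 * x))) - 1

lemma E_mem (x : ℝ) (hx : 0 < x) : 0 < exp (-2 * x) ∧ exp (-2 * x) < 1 :=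
  ⟨exp_pos _, by rw [exp_lt_one_iff]; linarith⟩

lemma E_deriv (x : ℝ) : HasDerivAt (fun x => exp (-2 * x)) (-2 * exp (-2 * x)) x := by
  have := ((hasDerivAt_id x).const_mul (-2)).exp
  refine this.congr_deriv ?_
  simp only [id]; ring

lemma f1_deriv (x : ℝ) (hx : 0 < x) :
    HasDerivAt (fun x => ff (exp (-2 * x))) (fd (exp (-2 * x)) * (-2 * exp (-2 * x))) x := by
  obtain ⟨h0, h1⟩ := E_mem x hx
  exact (ff_deriv _ (by rw [abs_of_pos h0]; exact h1)).comp x (E_deriv x)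

lemma f2_deriv (x : ℝ) (hx : 0 < x) :
    HasDerivAt (fun x => ff (1 - exp (-2 * x)))
      (fd (1 - exp (-2 * x)) * -(-2 * exp (-2 * x))) x := by
  obtain ⟨h0, h1⟩ := E_mem x hx
  exact (ff_deriv (1 - exp (-2 * x)) (by rw [abs_of_pos (by linarith)]; linarith)).comp x
    ((E_deriv x).const_sub 1)

lemma f1_pos (x : ℝ) (hx : 0 < x) : 0 < ff (exp (-2 * x)) := by
  obtain ⟨h0, h1⟩ := E_mem x hx
  linarith [ff_one_le _ h0.le h1]
lemma f2_pos (x : ℝ) (hx : 0 < x) : 0 < ff (1 - exp (-2 * x)) := by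
  obtain ⟨h0, h1⟩ := E_mem x hx
  linarith [ff_one_le (1 - exp (-2 * x)) (by linarith) (by linarith)]

lemma UU_pos (x : ℝ) (hx : 0 < x) : 0 < UU x := by
  have := f1_pos x hx
  have := f2_pos x hx
  unfold UU; positivity

lemma MM_pos (x : ℝ) (hx : 0 < x) : 0 < MM x := by
  have := f1_pos x hx
  have := f2_pos x hx
  have : 0 < 1 - exp (-2 * x) := by linarith [(E_mem x hx).2]
  unfold MM; positivity

lemma wr' (z : ℝ) (hz : 0 < z) (hz1 : z < 1) :
    π * (z * (1 - z) * (fd z * ff (1 - z) + ff z * fd (1 - z))) = 1 := by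
  have h := wronskian z hz hz1
  simp only [pp, gg_eq] at h
  rw [eq_div_iff pi_ne_zero] at h
  linear_combination h

lemma UU_deriv (x : ℝ) (hx : 0 < x) : HasDerivAt UU (UU x / MM x) x := by
  have p1 := f1_pos x hx
  have p2 := f2_pos x hx
  have := ((f2_deriv x hx).div (f1_deriv x hx) p1.ne').const_mul (π / 2)
  refine this.congr_deriv ?_
  obtain ⟨h0, h1⟩ := E_mem x hx
  have w := wr' _ h0 h1
  unfold UU MM
  set z := exp (-2 * x)
  have h2 : 0 < 1 - z := by linarith
  have hp := pi_pos
  have : π / 2 * (ff (1 - z) / ff z) / (π / 2 * ((1 - z) * ff z * ff (1 - z)))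
      = 1 / ((1 - z) * ff z ^ 2) := by
    field_simp
  rw [this, ← mul_div_assoc, div_eq_div_iff (by positivity) (by positivity)]
  linear_combination (ff z ^ 2) * w

lemma MM_deriv (x : ℝ) (hx : 0 < x) : HasDerivAt MM (BB x) x := by
  have := ((((E_deriv x).const_sub 1).mul (f1_deriv x hx)).mul (f2_deriv x hx)).const_mul (π / 2)
  refine this.congr_deriv ?_
  obtain ⟨h0, h1⟩ := E_mem x hx
  have w := wr' _ h0 h1
  simp only [BB, ee, Pi.mul_apply]
  linear_combination -w

lemma BB_one (x : ℝ) (hx : 0 < x) : 1 ≤ BB x := by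
  obtain ⟨h0, h1⟩ := E_mem x hx
  have w := wr' _ h0 h1
  have h := fd_le _ h0 h1
  have p2 := f2_pos x hx
  unfold BB ee
  set z := exp (-2 * x)
  have hp := pi_pos
  have : 0 ≤ π * z * ff (1 - z) * (ff z - 2 * (1 - z) * fd z) :=
    mul_nonneg (by positivity) (by linarith)
  linarith

lemma BB_anti (x y : ℝ) (hx : 0 < x) (hxy : x ≤ y) : BB y ≤ BB x := by
  obtain ⟨h0, h1⟩ := E_mem x hx
  obtain ⟨g0, g1⟩ := E_mem y (hx.trans_le hxy)
  have hE : exp (-2 * y) ≤ exp (-2 * x) := exp_le_exp.2 (by linarith)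
  have a := ff_mono ⟨g0.le, g1⟩ ⟨h0.le, h1⟩ hE
  have b := ee_anti (a := 1 - exp (-2 * x)) (b := 1 - exp (-2 * y)) ⟨by linarith, by linarith⟩
    ⟨by linarith, by linarith⟩ (by linarith)
  have := ee_pos (1 - exp (-2 * y)) (by linarith) (by linarith)
  have := f1_pos x hx
  have := pi_pos
  unfold BB
  gcongr

lemma MM_lim : Tendsto MM (𝓝[>] 0) (𝓝 0) := by
  have hE : Tendsto (fun x : ℝ => exp (-2 * x)) (𝓝[>] 0) (𝓝[<] 1) := by
    apply tendsto_nhdsWithin_of_tendsto_nhds_of_eventually_within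
    · apply tendsto_nhdsWithin_of_tendsto_nhds
      have : Tendsto (fun x : ℝ => exp (-2 * x)) (𝓝 0) (𝓝 (exp (-2 * 0))) := by
        apply Continuous.tendsto; fun_prop
      simpa using this
    · filter_upwards [self_mem_nhdsWithin] with x hx
      exact (E_mem x hx).2
  have l1 := ff_lim.comp hE
  have l2 : Tendsto (fun x : ℝ => ff (1 - exp (-2 * x))) (𝓝[>] 0) (𝓝 (ff 0)) := by
    have h : Tendsto (fun x : ℝ => 1 - exp (-2 * x)) (𝓝[>] 0) (𝓝 0) := by
      have := (hE.mono_right nhdsWithin_le_nhds).const_sub 1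
      simpa using this
    exact (ff_deriv 0 (by simp)).continuousAt.tendsto.comp h
  have := (l1.mul l2).const_mul (π / 2)
  rw [zero_mul, mul_zero] at this
  exact this

lemma quot_unbdd (C : ℝ) (hC : 0 ≤ C) : ∃ z ∈ Ioo (0:ℝ) 1, C < ff z / ff (1 - z) := by
  obtain ⟨z, hz, h⟩ := ff_unbdd ((C + 1) * ff (1/2))
  refine ⟨z, hz, ?_⟩
  have hh := ff_one_le (1/2) (by norm_num) (by norm_num)
  have hz2 : 1/2 ≤ z := by
    by_contra! hc
    have := ff_mono ⟨hz.1.le, hz.2⟩ (⟨by norm_num, by norm_num⟩ : (1/2:ℝ) ∈ Ico (0:ℝ) 1) hc.le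
    nlinarith
  have h1 := ff_mono (a := 1 - z) (b := 1/2) ⟨by linarith [hz.2], by linarith [hz.1]⟩
    ⟨by norm_num, by norm_num⟩ (by linarith)
  have h2 := ff_one_le (1 - z) (by linarith [hz.2]) (by linarith [hz.1])
  rw [lt_div_iff₀ (by linarith)]
  nlinarith

lemma exists_E (z : ℝ) (hz : z ∈ Ioo (0:ℝ) 1) : ∃ x > 0, exp (-2 * x) = z := by
  refine ⟨-log z / 2, ?_, ?_⟩
  · have := log_neg hz.1 hz.2
    show 0 < -log z / 2
    linarith
  · rw [show -2 * (-log z / 2) = log z by ring, exp_log hz.1]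

lemma UU_surj (w : ℝ) (hw : 0 < w) : ∃ y > 0, UU y = w := by
  have hp := pi_pos
  obtain ⟨z, hz, h⟩ := quot_unbdd (π / 2 / w) (by positivity)
  obtain ⟨a, ha, rfl⟩ := exists_E z hz
  obtain ⟨z', hz', h'⟩ := quot_unbdd (w / (π / 2)) (by positivity)
  obtain ⟨b, hb, hb'⟩ := exists_E (1 - z') ⟨by linarith [hz'.2], by linarith [hz'.1]⟩
  have la : UU a ≤ w := by
    have p1 := f1_pos a ha
    have p2 := f2_pos a ha
    unfold UU
    rw [div_lt_div_iff₀ hw p2] at h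
    rw [← mul_div_assoc, div_le_iff₀ p1]
    linarith
  have lb : w ≤ UU b := by
    unfold UU
    rw [hb', sub_sub_cancel]
    rw [div_lt_iff₀ (by positivity)] at h'
    linarith
  have := isPreconnected_Ioi.intermediate_value (a := a) (b := b) ha hb (f := UU)
    (fun x hx => (UU_deriv x hx).continuousAt.continuousWithinAt) ⟨la, lb⟩
  obtain ⟨y, hy, e⟩ := this
  exact ⟨y, hy, e⟩

lemma Ka_eq (r : ℝ) : Ka (1/2) r = π / 2 * ff (r ^ 2) := by
  simp only [Ka, ff, cf, pow_mul]

lemma ff_junk (z : ℝ) (hz : 1 ≤ z) : ff z = 0 := by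
  apply tsum_eq_zero_of_not_summable
  intro h
  apply cf_not_summable
  refine Summable.of_nonneg_of_le (fun n => (cf_pos n).le) (fun n => ?_) h
  exact le_mul_of_one_le_right (cf_pos n).le (one_le_pow₀ hz)

lemma sin_half : Real.sin (π * (1/2)) = 1 := by
  rw [mul_one_div, sin_pi_div_two]

lemma E_log (r : ℝ) (hr : 0 < r) : exp (-2 * -log r) = r ^ 2 := by
  rw [show -2 * -log r = log r + log r by ring, exp_add, exp_log hr]; ring

lemma muG_eq (r : ℝ) (hr : r ∈ Ioo (0:ℝ) 1) : muG (1/2) r = UU (-log r) := by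
  have : 0 ≤ 1 - r ^ 2 := by nlinarith [hr.1, hr.2]
  rw [muG, sin_half, Ka_eq, Ka_eq, sq_sqrt this, UU, E_log r hr.1]
  have := pi_pos
  rw [mul_div_mul_left _ _ (by positivity), mul_one]

lemma mA_eq (r : ℝ) (hr : r ∈ Ioo (0:ℝ) 1) : mA (1/2) r = MM (-log r) := by
  have : 0 ≤ 1 - r ^ 2 := by nlinarith [hr.1, hr.2]
  rw [mA, sin_half, Ka_eq, Ka_eq, sq_sqrt this, MM, E_log r hr.1]
  have := pi_pos
  field_simp

lemma muG_abs (r : ℝ) : muG (1/2) |r| = muG (1/2) r := by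
  simp only [muG, Ka_eq, sq_abs]

lemma muG_zero : muG (1/2) 0 = 0 := by
  simp [muG, Ka_eq, ff_junk 1 le_rfl, -one_div]

lemma muG_big (r : ℝ) (hr : 1 ≤ |r|) : muG (1/2) r = 0 := by
  rw [← muG_abs, muG, Ka_eq |r|, ff_junk _ (one_le_pow₀ hr)]
  simp

lemma phi_spec (K r : ℝ) (hK : 1 ≤ K) (hr : r ∈ Ioo (0:ℝ) 1) :
    ∃ y > 0, |phiHP (1/2) K r| = exp (-y) ∧ UU y = 1 / K * UU (-log r) := by
  have hx : 0 < -log r := by linarith [log_neg hr.1 hr.2]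
  have hp : 0 < muG (1/2) r / K := by
    rw [muG_eq r hr]
    exact div_pos (UU_pos _ hx) (by linarith)
  have hex : ∃ v, muG (1/2) v = muG (1/2) r / K := by
    obtain ⟨y, hy, e⟩ := UU_surj _ hp
    refine ⟨exp (-y), ?_⟩
    rw [muG_eq _ ⟨exp_pos _, by rw [exp_lt_one_iff]; linarith⟩, log_exp, neg_neg, e]
  have hv : muG (1/2) (phiHP (1/2) K r) = muG (1/2) r / K := Function.invFun_eq hex
  set v := phiHP (1/2) K r
  have h0 : v ≠ 0 := by
    intro h
    rw [h, muG_zero] at hv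
    linarith
  have h1 : |v| < 1 := by
    by_contra! h
    rw [muG_big v h] at hv
    linarith
  have h0' : 0 < |v| := abs_pos.2 h0
  refine ⟨-log |v|, by linarith [log_neg h0' h1], ?_, ?_⟩
  · rw [neg_neg, exp_log h0']
  · rw [← muG_eq _ ⟨h0', h1⟩, muG_abs, hv, muG_eq r hr]
    ring

theorem classical_submultiplicative (r t K : ℝ)
    (hr : r ∈ Set.Ioo (0:ℝ) 1) (ht : t ∈ Set.Ioo (0:ℝ) 1) (hK : 1 ≤ K) :
    phiHP (1/2) K r * phiHP (1/2) K t / phiHP (1/2) K (r * t) ≤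
      Real.exp ((1 - 1/K) * (mA (1/2) r + mA (1/2) t - mA (1/2) (r * t))) := by
  have hrt : r * t ∈ Ioo (0:ℝ) 1 :=
    ⟨mul_pos hr.1 ht.1, by nlinarith [hr.1, hr.2, ht.1, ht.2]⟩
  obtain ⟨y1, hy1, e1, u1⟩ := phi_spec K r hK hr
  obtain ⟨y2, hy2, e2, u2⟩ := phi_spec K t hK ht
  obtain ⟨y3, hy3, e3, u3⟩ := phi_spec K (r * t) hK hrt
  have hl : -log (r * t) = -log r + -log t := by
    rw [log_mul hr.1.ne' ht.1.ne']; ring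
  rw [hl] at u3
  have hK0 : 0 < K := by linarith
  have main := abstract_sub UU MM BB UU_deriv MM_deriv UU_pos MM_pos BB_anti BB_one MM_lim UU_surj
    (1 / K) (by positivity) (by rw [div_le_one hK0]; exact hK) (-log r) (-log t) y1 y2 y3
    (by linarith [log_neg hr.1 hr.2]) (by linarith [log_neg ht.1 ht.2]) hy1 hy2 hy3 u1 u2 u3
  refine (le_abs_self _).trans ?_
  rw [abs_div, abs_mul, e1, e2, e3, ← exp_add, ← exp_sub, exp_le_exp,
    mA_eq r hr, mA_eq t ht, mA_eq _ hrt, hl]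
  linarith
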